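/- Let u be H-harmonic on B_n with a boundary distribution. Then Nu vanishes on the boundary in the sense of distributions: for every Φ ∈ C^∞(S^{n-1}), lim_{r→1⁻} ∫_{S^{n-1}} Nu(rζ)Φ(ζ) dσ(ζ) = 0. -/

import Mathlib

/-!
Write `Δ_S` for the spherical Laplacian, the sum of `(xᵢ∂ⱼ - xⱼ∂ᵢ)²` over `i < j`. In polar form
`|x|²Δ = N² + (n-2)N + Δ_S` (`polar_laplacian`), so an `H`-harmonic `u` satisfies
`(1-r²)N²u + (n-2)(1+r²)Nu + (1-r²)Δ_S u = 0` on the sphere of radius `r`. Integrate this against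
`Φ`. The surface measure is rotation invariant, so angular derivatives can be integrated by parts
and `Δ_S` moves onto `Φ` (`integral_sphLap_mul`). Hence `G(r) = ∫ Nu(rζ)Φ(ζ) dσ(ζ)` solves
`(1-r²) r G' + (n-2)(1+r²) G = -(1-r²) H` with `H(r) = ∫ u(rζ) Δ_SΦ(ζ) dσ(ζ)`, and `H` converges as
`r → 1` because `u` has a boundary distribution. With the integrating factor `m = (r/(1-r²))^(n-2)`,
which blows up at `1` since `n ≥ 3`, one has `(mG)' = o(m')`, and therefore `G → 0`
(`tendsto_zero_of_ode`).

The only facts about `σ` that matter are that it is a finite measure carried by the sphere and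
invariant under linear isometries. Finiteness is immediate from the normalization: if the Hausdorff
measure of the sphere were `0` or `∞`, the conventions for `⁻¹` would make `sphMeasure` zero.
-/

open MeasureTheory Metric Filter Topology Set
open scoped ContDiff ENNReal NNReal

noncomputable section

/-- `E n` is the Euclidean space `ℝⁿ`. -/
abbrev E (n : ℕ) := EuclideanSpace ℝ (Fin n)

/-- The normalized surface measure `σ` on the unit sphere `S^{n-1}` (total mass `1`). -/
noncomputable def sphMeasure (n : ℕ) : Measure (E n) :=
  ((μH[(n : ℝ) - 1] (sphere (0 : E n) 1))⁻¹) • ((μH[(n : ℝ) - 1]).restrict (sphere (0 : E n) 1))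

/-- The Euclidean Laplacian `Δu(x) = Σ ∂²u/∂x_i²`. -/
noncomputable def lap (n : ℕ) (u : E n → ℝ) (x : E n) : ℝ :=
  ∑ i : Fin n, fderiv ℝ (fun y => fderiv ℝ u y (EuclideanSpace.single i 1)) x (EuclideanSpace.single i 1)

/-- The normal derivation operator `Nu(x) = Σ x_i ∂u/∂x_i(x)`, i.e. the derivative of `u`
at `x` in the direction `x`. -/
noncomputable def Nder (n : ℕ) (u : E n → ℝ) (x : E n) : ℝ := fderiv ℝ u x x

/-- `u` is `H`-harmonic on `B_n` :
`Du(x) = (1-|x|²)²Δu(x) + 2(n-2)(1-|x|²)Nu(x) = 0` on the unit ball. -/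
def HHarmonic (n : ℕ) (u : E n → ℝ) : Prop :=
  ∀ x ∈ ball (0 : E n) 1,
    (1 - ‖x‖ ^ 2) ^ 2 * lap n u x + 2 * ((n : ℝ) - 2) * (1 - ‖x‖ ^ 2) * Nder n u x = 0

/-- The hyperbolic Poisson kernel `P_h(x,ξ) = ((1-|x|²)/|x-ξ|²)^{n-1}`. -/
noncomputable def Ph (n : ℕ) (x ξ : E n) : ℝ := ((1 - ‖x‖ ^ 2) / ‖x - ξ‖ ^ 2) ^ (n - 1)

/-- The Euclidean Poisson kernel `P_e(x,ξ) = (1-|x|²)/|x-ξ|ⁿ`. -/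
noncomputable def Pe (n : ℕ) (x ξ : E n) : ℝ := (1 - ‖x‖ ^ 2) / ‖x - ξ‖ ^ n

/-- `u` has a boundary distribution : for every smooth `Φ` on the sphere,
`∫ u(rζ)Φ(ζ)dσ(ζ)` has a finite limit as `r → 1⁻`. -/
def HasBoundaryDistribution (n : ℕ) (u : E n → ℝ) : Prop :=
  ∀ Φ : E n → ℝ, ContDiff ℝ ∞ Φ →
    ∃ L : ℝ, Tendsto (fun r : ℝ => ∫ ζ, u (r • ζ) * Φ ζ ∂(sphMeasure n)) (𝓝[<] (1 : ℝ)) (𝓝 L)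

/-- The operator `N = Σ x_i ∂/∂x_i` acting on functions. -/
noncomputable def NOp (n : ℕ) : (E n → ℝ) → (E n → ℝ) := fun u x => fderiv ℝ u x x

/-! ### Vector fields of linear maps -/

/-- The first-order operator `f ↦ (x ↦ Df(x)(A x))`, the derivation along the linear vector field
`A`. For `A = id` it is `NOp`. -/
def linDer {n : ℕ} (A : E n →L[ℝ] E n) (f : E n → ℝ) (x : E n) : ℝ := fderiv ℝ f x (A x)

lemma linDer_contDiffOn {n : ℕ} (A : E n →L[ℝ] E n) {f : E n → ℝ} {U : Set (E n)} (hU : IsOpen U)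
    (hf : ContDiffOn ℝ ∞ f U) : ContDiffOn ℝ ∞ (linDer A f) U :=
  (hf.fderiv_of_isOpen hU (m := ∞) (by simp)).clm_apply A.contDiff.contDiffOn

lemma linDer_comp_smul {n : ℕ} (A : E n →L[ℝ] E n) (f : E n → ℝ) (r : ℝ) :
    linDer A (fun x => f (r • x)) = fun x => linDer A f (r • x) := by
  funext x
  have := congrArg (fun T : E n →L[ℝ] ℝ => T (A x)) (fderiv_comp_smul (𝕜 := ℝ) (f := f) (x := x) r)
  simpa [linDer] using this

lemma hasFDerivAt_fderiv {n : ℕ} {f : E n → ℝ} {U : Set (E n)} (hU : IsOpen U)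
    (hf : ContDiffOn ℝ ∞ f U) {x : E n} (hx : x ∈ U) :
    HasFDerivAt (fderiv ℝ f) (fderiv ℝ (fderiv ℝ f) x) x :=
  (((hf.fderiv_of_isOpen hU (m := ∞) (by simp)).contDiffAt (hU.mem_nhds hx)).differentiableAt
    (by simp)).hasFDerivAt

lemma linDer_linDer {n : ℕ} (A : E n →L[ℝ] E n) {f : E n → ℝ} {U : Set (E n)} (hU : IsOpen U)
    (hf : ContDiffOn ℝ ∞ f U) {x : E n} (hx : x ∈ U) :
    linDer A (linDer A f) x = fderiv ℝ (fderiv ℝ f) x (A x) (A x) + fderiv ℝ f x (A (A x)) := by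
  have h := (hasFDerivAt_fderiv hU hf hx).clm_apply (A.hasFDerivAt (x := x))
  have h2 : fderiv ℝ (linDer A f) x = _ := h.fderiv
  rw [linDer, h2]
  simp [add_comm]

lemma lap_eq {n : ℕ} {f : E n → ℝ} {U : Set (E n)} (hU : IsOpen U)
    (hf : ContDiffOn ℝ ∞ f U) {x : E n} (hx : x ∈ U) :
    lap n f x = ∑ i : Fin n, fderiv ℝ (fderiv ℝ f) x (EuclideanSpace.single i 1)
      (EuclideanSpace.single i 1) := by
  refine Finset.sum_congr rfl fun i _ => ?_
  have h := (hasFDerivAt_fderiv hU hf hx).clm_apply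
    (hasFDerivAt_const (EuclideanSpace.single i (1:ℝ) : E n) x)
  rw [h.fderiv]
  simp

/-- The infinitesimal rotation `x ↦ xᵢ eⱼ - xⱼ eᵢ` in the `(i, j)` coordinate plane
(zero if `i = j`). -/
def rotGen (n : ℕ) (i j : Fin n) : E n →L[ℝ] E n :=
  (EuclideanSpace.proj i : E n →L[ℝ] ℝ).smulRight (EuclideanSpace.single j 1) -
    (EuclideanSpace.proj j : E n →L[ℝ] ℝ).smulRight (EuclideanSpace.single i 1)

lemma rotGen_apply {n : ℕ} (i j : Fin n) (x : E n) :
    rotGen n i j x = x i • EuclideanSpace.single j (1:ℝ) - x j • EuclideanSpace.single i (1:ℝ) := by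
  simp [rotGen]

/-- Twice the spherical Laplacian, extended to functions on `ℝⁿ`: the sum of the squares of all
angular derivations `xᵢ∂ⱼ - xⱼ∂ᵢ`, over ordered pairs `(i, j)`. -/
def sphLap (n : ℕ) (f : E n → ℝ) (x : E n) : ℝ :=
  ∑ i : Fin n, ∑ j : Fin n, linDer (rotGen n i j) (linDer (rotGen n i j) f) x

lemma sum_smul_single {n : ℕ} (x : E n) :
    ∑ i : Fin n, x i • (EuclideanSpace.single i (1:ℝ) : E n) = x := by
  ext j
  simp [Finset.sum_apply, Pi.single_apply]

/-- Polar decomposition of the Laplacian: `|x|²Δ = N² + (n-2)N + Δ_S`. -/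
lemma polar_laplacian {n : ℕ} {f : E n → ℝ} {U : Set (E n)} (hU : IsOpen U)
    (hf : ContDiffOn ℝ ∞ f U) {x : E n} (hx : x ∈ U) :
    ‖x‖ ^ 2 * lap n f x = NOp n (NOp n f) x + ((n:ℝ) - 2) * NOp n f x + sphLap n f x / 2 := by
  have hN : NOp n (NOp n f) x = _ := linDer_linDer (ContinuousLinearMap.id ℝ (E n)) hU hf hx
  rw [hN, lap_eq hU hf hx, sphLap]
  simp only [linDer_linDer _ hU hf hx, NOp, ContinuousLinearMap.id_apply]
  generalize fderiv ℝ (fderiv ℝ f) x = B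
  generalize fderiv ℝ f x = T
  set e : Fin n → E n := fun i => EuclideanSpace.single i (1:ℝ) with he
  have hnorm : ‖x‖ ^ 2 = ∑ i, x i ^ 2 := EuclideanSpace.real_norm_sq_eq x
  have hx' : ∑ i, x i • e i = x := sum_smul_single x
  have hT : T x = ∑ i, x i * T (e i) := by
    conv_lhs => rw [← hx']
    simp
  have hB : B x x = ∑ i, ∑ j, x i * (x j * B (e i) (e j)) := by
    conv_lhs => rw [← hx']
    simp only [map_sum, map_smul, sum_apply, smul_apply, smul_eq_mul, Finset.mul_sum]
    rw [Finset.sum_comm]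
    refine Finset.sum_congr rfl fun i _ => Finset.sum_congr rfl fun j _ => by ring
  have hB' : B x x = ∑ i, ∑ j, x i * (x j * B (e j) (e i)) := by
    rw [hB, Finset.sum_comm]
    refine Finset.sum_congr rfl fun i _ => Finset.sum_congr rfl fun j _ => by ring
  have h1 : ∀ i j : Fin n, B (rotGen n i j x) (rotGen n i j x) =
      x i ^ 2 * B (e j) (e j) + x j ^ 2 * B (e i) (e i) - x i * (x j * B (e j) (e i))
        - x i * (x j * B (e i) (e j)) := by
    intro i j
    simp only [rotGen_apply, map_sub, map_smul, sub_apply,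
      smul_apply, smul_eq_mul, he]
    ring
  have h2 : ∀ i j : Fin n, T (rotGen n i j (rotGen n i j x)) =
      (if i = j then x i * T (e i) else 0) + (if i = j then x i * T (e i) else 0)
        - x j * T (e j) - x i * T (e i) := by
    intro i j
    rw [rotGen_apply, rotGen_apply]
    by_cases h : i = j
    · subst h; simp
    · simp [h, Ne.symm h, he]
  have key1 : ∑ i, ∑ j, B (rotGen n i j x) (rotGen n i j x) =
      2 * (‖x‖ ^ 2 * ∑ i, B (e i) (e i)) - 2 * B x x := by
    simp only [h1, Finset.sum_sub_distrib, Finset.sum_add_distrib]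
    rw [← hB, ← hB', hnorm]
    simp only [← Finset.mul_sum, ← Finset.sum_mul]
    ring
  have key2 : ∑ i, ∑ j, T (rotGen n i j (rotGen n i j x)) = - (2 * ((n:ℝ) - 1) * T x) := by
    simp only [h2, Finset.sum_sub_distrib, Finset.sum_add_distrib]
    simp only [Finset.sum_ite_eq, Finset.mem_univ, if_true, ← hT, Finset.sum_const,
      Finset.card_univ, Fintype.card_fin, nsmul_eq_mul, ← Finset.mul_sum]
    ring
  have key3 : ∑ i, ∑ j, (B (rotGen n i j x) (rotGen n i j x) +
      T (rotGen n i j (rotGen n i j x))) = 2 * (‖x‖ ^ 2 * ∑ i, B (e i) (e i)) - 2 * B x x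
        - 2 * ((n:ℝ) - 1) * T x := by
    simp only [Finset.sum_add_distrib]
    rw [key1, key2]; ring
  rw [key3]
  ring

/-! ### The surface measure -/

instance sphMeasure_finite (n : ℕ) : IsFiniteMeasure (sphMeasure n) := by
  refine ⟨lt_of_le_of_lt ?_ ENNReal.one_lt_top⟩
  simp only [sphMeasure, Measure.smul_apply, Measure.restrict_apply MeasurableSet.univ, univ_inter,
    smul_eq_mul]
  exact ENNReal.inv_mul_le_one _

lemma sphMeasure_restrict (n : ℕ) :
    (sphMeasure n).restrict (sphere (0 : E n) 1) = sphMeasure n := by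
  rw [sphMeasure, Measure.restrict_smul, Measure.restrict_restrict isClosed_sphere.measurableSet,
    inter_self]

lemma ae_sphere (n : ℕ) : ∀ᵐ ζ ∂(sphMeasure n), ζ ∈ sphere (0 : E n) 1 := by
  rw [← sphMeasure_restrict]
  exact ae_restrict_mem isClosed_sphere.measurableSet

lemma integrable_sph {n : ℕ} {f : E n → ℝ} (hf : ContinuousOn f (sphere (0 : E n) 1)) :
    Integrable f (sphMeasure n) := by
  have h := hf.integrableOn_compact (μ := sphMeasure n) (isCompact_sphere (0 : E n) 1)
  rwa [IntegrableOn, sphMeasure_restrict] at h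

lemma sphMeasure_invariant {n : ℕ} (R : E n ≃ₗᵢ[ℝ] E n) (f : E n → ℝ) :
    ∫ ζ, f (R ζ) ∂(sphMeasure n) = ∫ ζ, f ζ ∂(sphMeasure n) := by
  have h1 := (R.toIsometryEquiv.measurePreserving_hausdorffMeasure ((n:ℝ) - 1)).restrict_preimage
    (isClosed_sphere (x := (0 : E n)) (ε := 1)).measurableSet
  have h2 : R.toIsometryEquiv ⁻¹' (sphere (0 : E n) 1) = sphere (0 : E n) 1 := by
    ext x; simp
  rw [h2] at h1
  have h3 := h1.integral_comp R.toHomeomorph.measurableEmbedding f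
  simp only [sphMeasure, integral_smul_measure]
  exact congrArg _ h3

/-- Differentiation under the integral over the sphere. -/
lemma hasDerivAt_sph {n : ℕ} {f f' : ℝ → E n → ℝ} {I : Set ℝ} (hI : IsOpen I) {t : ℝ} (ht : t ∈ I)
    (hf : ∀ s ∈ I, ContinuousOn (f s) (sphere (0 : E n) 1))
    (hf' : ContinuousOn (fun p : ℝ × E n => f' p.1 p.2) (I ×ˢ sphere (0 : E n) 1))
    (hd : ∀ s ∈ I, ∀ ζ ∈ sphere (0 : E n) 1, HasDerivAt (fun s => f s ζ) (f' s ζ) s) :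
    HasDerivAt (fun s => ∫ ζ, f s ζ ∂(sphMeasure n)) (∫ ζ, f' t ζ ∂(sphMeasure n)) t := by
  obtain ⟨ε, hε, hsub⟩ := nhds_basis_closedBall.mem_iff.1 (hI.mem_nhds ht)
  have hK : IsCompact (closedBall t ε ×ˢ sphere (0 : E n) 1) :=
    (isCompact_closedBall t ε).prod (isCompact_sphere 0 1)
  obtain ⟨C, hC⟩ := hK.exists_bound_of_continuousOn
    (hf'.mono (prod_mono hsub Subset.rfl))
  refine (hasDerivAt_integral_of_dominated_loc_of_deriv_le (μ := sphMeasure n) (F := f) (F' := f')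
    (bound := fun _ => C) (closedBall_mem_nhds t hε) ?_ ?_ ?_ ?_ ?_ ?_).2
  · filter_upwards [hI.mem_nhds ht] with s hs using (integrable_sph (hf s hs)).aestronglyMeasurable
  · exact integrable_sph (hf t ht)
  · refine (integrable_sph ?_).aestronglyMeasurable
    exact hf'.comp (f := fun ζ : E n => (t, ζ)) (by fun_prop) (fun ζ hζ => ⟨ht, hζ⟩)
  · filter_upwards [ae_sphere n] with ζ hζ s hs using hC (s, ζ) ⟨hs, hζ⟩
  · exact integrable_const _
  · filter_upwards [ae_sphere n] with ζ hζ s hs using hd s (hsub hs) ζ hζ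

/-! ### Integration by parts for angular derivatives -/

/-- The rotation by angle `t` in the `(i, j)` coordinate plane, as a linear map (an isometry when
`i ≠ j`). -/
def rotLin {n : ℕ} (i j : Fin n) (t : ℝ) : E n →ₗ[ℝ] E n where
  toFun x := x + (((Real.cos t - 1) * x i - Real.sin t * x j) • EuclideanSpace.single i (1:ℝ) +
    (Real.sin t * x i + (Real.cos t - 1) * x j) • EuclideanSpace.single j (1:ℝ))
  map_add' x y := by
    simp only [PiLp.add_apply]
    module
  map_smul' c x := by
    simp only [PiLp.smul_apply, smul_eq_mul, RingHom.id_apply]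
    module

lemma rotLin_norm {n : ℕ} {i j : Fin n} (hij : i ≠ j) (t : ℝ) (x : E n) :
    ‖rotLin i j t x‖ = ‖x‖ := by
  have h : ‖rotLin i j t x‖ ^ 2 = ‖x‖ ^ 2 := by
    simp only [rotLin, LinearMap.coe_mk, AddHom.coe_mk]
    generalize ha : (Real.cos t - 1) * x i - Real.sin t * x j = a
    generalize hb : Real.sin t * x i + (Real.cos t - 1) * x j = b
    have h0 : inner ℝ (EuclideanSpace.single i (1:ℝ) : E n) (EuclideanSpace.single j (1:ℝ)) = 0 := by
      simp [EuclideanSpace.inner_single_left, hij]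
    rw [norm_add_sq_real, norm_add_sq_real, inner_add_right, inner_smul_right, inner_smul_right,
      inner_smul_left, inner_smul_right, h0]
    simp only [norm_smul, PiLp.norm_single, EuclideanSpace.inner_single_right, norm_one,
      mul_one, Real.norm_eq_abs, sq_abs]
    simp only [conj_trivial, one_mul, mul_zero, add_zero]
    subst ha hb
    linear_combination (x i ^ 2 + x j ^ 2) * Real.sin_sq_add_cos_sq t
  exact (sq_eq_sq₀ (norm_nonneg _) (norm_nonneg _)).1 h

lemma rotLin_integral {n : ℕ} {i j : Fin n} (hij : i ≠ j) (t : ℝ) (f : E n → ℝ) :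
    ∫ ζ, f (rotLin i j t ζ) ∂(sphMeasure n) = ∫ ζ, f ζ ∂(sphMeasure n) :=
  sphMeasure_invariant
    (LinearIsometry.toLinearIsometryEquiv ⟨rotLin i j t, rotLin_norm hij t⟩ rfl) f

/-- The velocity of the rotation flow through `x` at time `t`. -/
def rotVel {n : ℕ} (i j : Fin n) (t : ℝ) (x : E n) : E n :=
  (-Real.sin t * x i - Real.cos t * x j) • EuclideanSpace.single i (1:ℝ) +
    (Real.cos t * x i + -Real.sin t * x j) • EuclideanSpace.single j (1:ℝ)

lemma rotLin_hasDerivAt {n : ℕ} (i j : Fin n) (t : ℝ) (x : E n) :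
    HasDerivAt (fun t => rotLin i j t x) (rotVel i j t x) t := by
  have hc : HasDerivAt (fun t => Real.cos t - 1) (-Real.sin t) t := (Real.hasDerivAt_cos t).sub_const 1
  have hs := Real.hasDerivAt_sin t
  exact ((((hc.mul_const (x i)).sub (hs.mul_const (x j))).smul_const _).add
    (((hs.mul_const (x i)).add (hc.mul_const (x j))).smul_const _)).const_add x

/-- The integral of an angular derivative vanishes, by rotation invariance. -/
lemma integral_linDer_rotGen {n : ℕ} (i j : Fin n) {w : E n → ℝ} {U : Set (E n)} (hU : IsOpen U)
    (hS : sphere (0 : E n) 1 ⊆ U) (hw : ContDiffOn ℝ ∞ w U) :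
    ∫ ζ, linDer (rotGen n i j) w ζ ∂(sphMeasure n) = 0 := by
  by_cases hij : i = j
  · subst hij; simp [linDer, rotGen]
  have hmem : ∀ (t : ℝ), ∀ ζ ∈ sphere (0 : E n) 1, rotLin i j t ζ ∈ sphere (0 : E n) 1 := by
    intro t ζ hζ
    simpa [rotLin_norm hij] using hζ
  have hcont : Continuous fun p : ℝ × E n => rotLin i j p.1 p.2 := by
    simp only [rotLin, LinearMap.coe_mk, AddHom.coe_mk]
    fun_prop
  have hcont' : Continuous fun p : ℝ × E n => rotVel i j p.1 p.2 := by
    simp only [rotVel]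
    fun_prop
  have hder := hasDerivAt_sph (n := n) (f := fun t ζ => w (rotLin i j t ζ))
    (f' := fun t ζ => fderiv ℝ w (rotLin i j t ζ) (rotVel i j t ζ)) isOpen_univ (mem_univ (0:ℝ))
    (fun s _ => hw.continuousOn.comp
      (hcont.comp (by fun_prop : Continuous fun ζ : E n => (s, ζ))).continuousOn
      (fun ζ hζ => hS (hmem s ζ hζ)))
    (((hw.continuousOn_fderiv_of_isOpen hU (by simp)).comp hcont.continuousOn
      (fun p hp => hS (hmem p.1 p.2 hp.2))).clm_apply hcont'.continuousOn)
    (fun s _ ζ hζ => ((((hw.contDiffAt (hU.mem_nhds (hS (hmem s ζ hζ)))).differentiableAt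
      (by simp)).hasFDerivAt).comp_hasDerivAt s (rotLin_hasDerivAt i j s ζ)))
  simp only [rotLin_integral hij _ w] at hder
  have h0 := hder.unique (hasDerivAt_const (0:ℝ) _)
  rw [← h0]
  refine integral_congr_ae (Eventually.of_forall fun ζ => ?_)
  have e1 : rotLin i j 0 ζ = ζ := by simp [rotLin]
  have e2 : rotVel i j 0 ζ = rotGen n i j ζ := by
    rw [rotGen_apply]; simp only [rotVel, Real.sin_zero, Real.cos_zero]; module
  simp only [linDer, e1, e2]

lemma integral_linDer_mul {n : ℕ} (i j : Fin n) {v Φ : E n → ℝ} {U : Set (E n)} (hU : IsOpen U)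
    (hS : sphere (0 : E n) 1 ⊆ U) (hv : ContDiffOn ℝ ∞ v U) (hΦ : ContDiffOn ℝ ∞ Φ U) :
    ∫ ζ, linDer (rotGen n i j) v ζ * Φ ζ ∂(sphMeasure n) =
      - ∫ ζ, v ζ * linDer (rotGen n i j) Φ ζ ∂(sphMeasure n) := by
  have h := integral_linDer_rotGen i j hU hS (hv.mul hΦ)
  have hae : (fun ζ => linDer (rotGen n i j) (fun x => v x * Φ x) ζ) =ᵐ[sphMeasure n]
      fun ζ => linDer (rotGen n i j) v ζ * Φ ζ + v ζ * linDer (rotGen n i j) Φ ζ := by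
    filter_upwards [ae_sphere n] with ζ hζ
    have h1 := (hv.contDiffAt (hU.mem_nhds (hS hζ))).differentiableAt (by simp)
    have h2 := (hΦ.contDiffAt (hU.mem_nhds (hS hζ))).differentiableAt (by simp)
    simp only [linDer]
    rw [fderiv_fun_mul h1 h2]
    simp
    ring
  have h' : ∫ ζ, linDer (rotGen n i j) (fun x => v x * Φ x) ζ ∂(sphMeasure n) = 0 := h
  rw [integral_congr_ae hae, integral_add] at h'
  · linarith
  · exact integrable_sph (((linDer_contDiffOn _ hU hv).mul hΦ).continuousOn.mono hS)
  · exact integrable_sph ((hv.mul (linDer_contDiffOn _ hU hΦ)).continuousOn.mono hS)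

/-- The spherical Laplacian is symmetric with respect to `σ`. -/
lemma integral_sphLap_mul {n : ℕ} {v Φ : E n → ℝ} {U : Set (E n)} (hU : IsOpen U)
    (hS : sphere (0 : E n) 1 ⊆ U) (hv : ContDiffOn ℝ ∞ v U) (hΦ : ContDiffOn ℝ ∞ Φ U) :
    ∫ ζ, sphLap n v ζ * Φ ζ ∂(sphMeasure n) = ∫ ζ, v ζ * sphLap n Φ ζ ∂(sphMeasure n) := by
  have hL : ∀ i j, ∀ {f : E n → ℝ}, ContDiffOn ℝ ∞ f U →
      ContDiffOn ℝ ∞ (linDer (rotGen n i j) f) U := fun i j f hf => linDer_contDiffOn _ hU hf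
  simp only [sphLap, Finset.sum_mul, Finset.mul_sum]
  have hi1 : ∀ i j, Integrable (fun ζ => linDer (rotGen n i j) (linDer (rotGen n i j) v) ζ * Φ ζ)
      (sphMeasure n) := fun i j =>
    integrable_sph (((hL i j (hL i j hv)).mul hΦ).continuousOn.mono hS)
  have hi2 : ∀ i j, Integrable (fun ζ => v ζ * linDer (rotGen n i j) (linDer (rotGen n i j) Φ) ζ)
      (sphMeasure n) := fun i j =>
    integrable_sph ((hv.mul (hL i j (hL i j hΦ))).continuousOn.mono hS)
  rw [integral_finsetSum _ fun i _ => integrable_finsetSum _ fun j _ => hi1 i j,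
    integral_finsetSum _ fun i _ => integrable_finsetSum _ fun j _ => hi2 i j]
  refine Finset.sum_congr rfl fun i _ => ?_
  rw [integral_finsetSum _ fun j _ => hi1 i j, integral_finsetSum _ fun j _ => hi2 i j]
  refine Finset.sum_congr rfl fun j _ => ?_
  rw [integral_linDer_mul i j hU hS (hL i j hv) hΦ, integral_linDer_mul i j hU hS hv (hL i j hΦ),
    neg_neg]

/-! ### The radial equation -/

/-- Solutions of the singular radial equation tend to `0` at `r = 1` when `H` converges there:
multiplied by the integrating factor `m = (r/(1-r²))ᵏ`, the solution `G` satisfies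
`|(mG)'| ≤ ε m'` near `1`, while `m → ∞`. -/
lemma tendsto_zero_of_ode {k : ℕ} (hk : 1 ≤ k) {G G' H : ℝ → ℝ} {L : ℝ}
    (hG : ∀ r ∈ Ioo (0:ℝ) 1, HasDerivAt G (G' r) r)
    (hode : ∀ r ∈ Ioo (0:ℝ) 1, (1 - r ^ 2) * (r * G' r) + k * (1 + r ^ 2) * G r =
      -((1 - r ^ 2) * H r))
    (hH : Tendsto H (𝓝[<] 1) (𝓝 L)) : Tendsto G (𝓝[<] 1) (𝓝 0) := by
  have hk0 : (0:ℝ) < k := by exact_mod_cast hk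
  set m : ℝ → ℝ := fun r => (r / (1 - r ^ 2)) ^ k with hm
  have hq : ∀ r ∈ Ioo (0:ℝ) 1, 0 < 1 - r ^ 2 := fun r hr => by nlinarith [hr.1, hr.2]
  have hmpos : ∀ r ∈ Ioo (0:ℝ) 1, 0 < m r := fun r hr => pow_pos (div_pos hr.1 (hq r hr)) k
  have hmd : ∀ r ∈ Ioo (0:ℝ) 1,
      HasDerivAt m (m r * (k * (1 + r ^ 2) / (r * (1 - r ^ 2)))) r := by
    intro r hr
    have h0 := hr.1.ne'
    have h1 := (hq r hr).ne'
    have hd := (((hasDerivAt_id r).div (((hasDerivAt_id r).pow 2).const_sub 1) h1).pow k)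
    refine hd.congr_deriv ?_
    obtain ⟨l, rfl⟩ : ∃ l, k = l + 1 := ⟨k - 1, by omega⟩
    simp only [hm, id, pow_succ (r / (1 - r ^ 2)) l, Nat.add_sub_cancel, Pi.div_apply, Pi.pow_apply]
    field_simp
    simp
    ring
  have hmG : ∀ r ∈ Ioo (0:ℝ) 1, HasDerivAt (fun r => m r * G r) (-(m r * H r / r)) r := by
    intro r hr
    have h0 := hr.1.ne'
    have h1 := (hq r hr).ne'
    refine ((hmd r hr).mul (hG r hr)).congr_deriv ?_
    field_simp
    linear_combination m r * (hode r hr)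
  have hinv : Tendsto (fun r => (m r)⁻¹) (𝓝[<] 1) (𝓝 0) := by
    have hc : ContinuousAt (fun r : ℝ => ((1 - r ^ 2) / r) ^ k) 1 := by
      refine ContinuousAt.pow (ContinuousAt.div (by fun_prop) (by fun_prop) (by simp)) k
    have h := hc.tendsto.mono_left (nhdsWithin_le_nhds (s := Iio 1))
    simp only [one_pow, sub_self, zero_div, zero_pow (by omega : k ≠ 0)] at h
    refine h.congr fun r => ?_
    simp [hm, ← inv_pow, inv_div]
  rw [Metric.tendsto_nhds]
  intro ε hε
  -- `δ` is the comparison constant; the remaining half of `ε` absorbs the initial value.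
  set δ := ε / 2 with hδ
  have hδ0 : 0 < δ := by positivity
  have hsmall : ∀ᶠ r in 𝓝[<] (1:ℝ), |(1 - r ^ 2) * H r| < δ * k := by
    have hc : Tendsto (fun r : ℝ => 1 - r ^ 2) (𝓝[<] 1) (𝓝 (1 - 1 ^ 2)) :=
      (by fun_prop : Continuous fun r : ℝ => 1 - r ^ 2).continuousAt.tendsto.mono_left
        nhdsWithin_le_nhds
    have h := (hc.mul hH).abs
    simp only [one_pow, sub_self, zero_mul, abs_zero] at h
    exact h.eventually_lt_const (by positivity)
  obtain ⟨a, ha, hsub⟩ := (mem_nhdsLT_iff_exists_Ioo_subset' (zero_lt_one' ℝ)).1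
    (hsmall.and (Ioo_mem_nhdsLT (zero_lt_one' ℝ)))
  obtain ⟨b, hab, hb1⟩ := exists_between (show a < 1 from ha)
  have hIco : ∀ r ∈ Ico b 1, |(1 - r ^ 2) * H r| < δ * k ∧ r ∈ Ioo (0:ℝ) 1 :=
    fun r hr => hsub ⟨hab.trans_le hr.1, hr.2⟩
  have hcomp : ∀ r ∈ Ico b 1,
      |m r * H r / r| ≤ δ * (m r * (k * (1 + r ^ 2) / (r * (1 - r ^ 2)))) := by
    intro r hr
    obtain ⟨h1, h2⟩ := hIco r hr
    have hm0 := hmpos r h2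
    have hq0 := hq r h2
    have hr0 := h2.1
    have hH' : |H r| ≤ δ * (k * (1 + r ^ 2)) / (1 - r ^ 2) := by
      rw [le_div_iff₀ hq0]
      rw [abs_mul, abs_of_pos hq0] at h1
      nlinarith [mul_pos (mul_pos hδ0 hk0) (pow_pos hr0 2)]
    rw [abs_div, abs_mul, abs_of_pos hm0, abs_of_pos hr0]
    calc m r * |H r| / r ≤ m r * (δ * (k * (1 + r ^ 2)) / (1 - r ^ 2)) / r := by gcongr
      _ = _ := by field_simp
  have hmono : ∀ s : ℝ, |s| = 1 → MonotoneOn (fun r => δ * m r + s * (m r * G r)) (Ico b 1) := by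
    intro s hs
    have hd : ∀ r ∈ Ico b 1, HasDerivAt (fun r => δ * m r + s * (m r * G r))
        (δ * (m r * (k * (1 + r ^ 2) / (r * (1 - r ^ 2)))) + s * (-(m r * H r / r))) r := fun r hr =>
      ((hmd r (hIco r hr).2).const_mul δ).add ((hmG r (hIco r hr).2).const_mul s)
    refine monotoneOn_of_deriv_nonneg (convex_Ico b 1)
      (fun r hr => (hd r hr).continuousAt.continuousWithinAt)
      (fun r hr => (hd r (interior_subset hr)).differentiableAt.differentiableWithinAt)
      (fun r hr => ?_)
    rw [(hd r (interior_subset hr)).deriv]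
    have h1 := hcomp r (interior_subset hr)
    have h2 := neg_abs_le (s * (-(m r * H r / r)))
    rw [abs_mul, hs, abs_neg, one_mul] at h2
    linarith
  set K := |m b * G b| with hK
  have hb : b ∈ Ico b 1 := ⟨le_rfl, hb1⟩
  have hmb := hmpos b (hIco b hb).2
  have hfin : Tendsto (fun r => K * (m r)⁻¹) (𝓝[<] 1) (𝓝 (K * 0)) := hinv.const_mul K
  rw [mul_zero] at hfin
  filter_upwards [hfin.eventually_lt_const hδ0, Ico_mem_nhdsLT hb1] with r hr1 hr2
  have hmr := hmpos r (hIco r hr2).2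
  have h1 := hmono 1 (by simp) hb hr2 hr2.1
  have h2 := hmono (-1) (by simp) hb hr2 hr2.1
  simp only at h1 h2
  have h3 := le_abs_self (m b * G b)
  have h4 := neg_abs_le (m b * G b)
  have h5 : |m r * G r| ≤ δ * m r + K := by
    rw [abs_le]
    constructor <;> nlinarith [mul_pos hδ0 hmb]
  rw [abs_mul, abs_of_pos hmr] at h5
  rw [← div_eq_mul_inv, div_lt_iff₀ hmr] at hr1
  rw [Real.dist_eq, sub_zero]
  have : m r * |G r| < m r * ε := by rw [hδ] at h5 hr1; linarith
  exact lt_of_mul_lt_mul_left this hmr.le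

/-- If `u` is `H`-harmonic on `B_n` with a boundary distribution, then `Nu`
vanishes on the boundary in the sense of distributions. -/
theorem stmt10 (n : ℕ) (hn : 3 ≤ n) (u : E n → ℝ)
    (hu : ContDiffOn ℝ ∞ u (ball (0 : E n) 1)) (hH : HHarmonic n u)
    (hbd : HasBoundaryDistribution n u) :
    ∀ Φ : E n → ℝ, ContDiff ℝ ∞ Φ →
      Tendsto (fun r : ℝ => ∫ ζ, NOp n u (r • ζ) * Φ ζ ∂(sphMeasure n))
        (𝓝[<] (1 : ℝ)) (𝓝 0) := by
  intro Φ hΦ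
  have hNsmooth : ∀ {f : E n → ℝ}, ContDiffOn ℝ ∞ f (ball (0 : E n) 1) →
      ContDiffOn ℝ ∞ (NOp n f) (ball (0 : E n) 1) := fun hf =>
    linDer_contDiffOn (ContinuousLinearMap.id ℝ (E n)) isOpen_ball hf
  have hLsmooth : ∀ {f : E n → ℝ} {U : Set (E n)}, IsOpen U → ContDiffOn ℝ ∞ f U →
      ContDiffOn ℝ ∞ (sphLap n f) U := fun hU hf =>
    ContDiffOn.sum fun i _ => ContDiffOn.sum fun j _ =>
      linDer_contDiffOn _ hU (linDer_contDiffOn _ hU hf)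
  have hNu := hNsmooth hu
  have hNNu := hNsmooth hNu
  have hLu := hLsmooth isOpen_ball hu
  have hΦL : ContDiff ℝ ∞ (sphLap n Φ) :=
    contDiffOn_univ.1 (hLsmooth isOpen_univ (contDiffOn_univ.2 hΦ))
  obtain ⟨L, hL⟩ := hbd _ hΦL
  have hmem : ∀ r ∈ Ioo (0:ℝ) 1, ∀ ζ ∈ sphere (0 : E n) 1, r • ζ ∈ ball (0 : E n) 1 := by
    intro r hr ζ hζ
    rw [mem_sphere_zero_iff_norm] at hζ
    rw [mem_ball_zero_iff, norm_smul, hζ, mul_one, Real.norm_eq_abs, abs_of_pos hr.1]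
    exact hr.2
  have hcomp : ∀ {f : E n → ℝ}, ContDiffOn ℝ ∞ f (ball (0 : E n) 1) → ∀ r ∈ Ioo (0:ℝ) 1,
      ContinuousOn (fun ζ => f (r • ζ) * Φ ζ) (sphere (0 : E n) 1) := fun hf r hr =>
    (hf.continuousOn.comp (by fun_prop) (hmem r hr)).mul hΦ.continuous.continuousOn
  have hder : ∀ r ∈ Ioo (0:ℝ) 1,
      HasDerivAt (fun r : ℝ => ∫ ζ, NOp n u (r • ζ) * Φ ζ ∂(sphMeasure n))
        (∫ ζ, fderiv ℝ (NOp n u) (r • ζ) ζ * Φ ζ ∂(sphMeasure n)) r := by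
    intro r hr
    have hcs : ContinuousOn (fun p : ℝ × E n => p.1 • p.2) (Ioo (0:ℝ) 1 ×ˢ sphere (0 : E n) 1) := by
      fun_prop
    refine hasDerivAt_sph (n := n) (f := fun r ζ => NOp n u (r • ζ) * Φ ζ)
      (f' := fun r ζ => fderiv ℝ (NOp n u) (r • ζ) ζ * Φ ζ) isOpen_Ioo hr (hcomp hNu) ?_ ?_
    · refine ContinuousOn.mul ?_ (hΦ.continuous.comp continuous_snd).continuousOn
      exact ((hNu.continuousOn_fderiv_of_isOpen isOpen_ball (by simp)).comp hcs
        (fun p hp => hmem p.1 hp.1 p.2 hp.2)).clm_apply continuous_snd.continuousOn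
    · intro s hs ζ hζ
      have h1 := ((hNu.contDiffAt (isOpen_ball.mem_nhds (hmem s hs ζ hζ))).differentiableAt
        (by simp)).hasFDerivAt
      have h2 : HasDerivAt (fun s : ℝ => s • ζ) ζ s := by
        simpa using (hasDerivAt_id s).smul_const ζ
      exact (h1.comp_hasDerivAt s h2).mul_const _
  refine tendsto_zero_of_ode (k := n - 2) (by omega) hder
    (H := fun r => (∫ ζ, u (r • ζ) * sphLap n Φ ζ ∂(sphMeasure n)) / 2) ?_ (hL.div_const 2)
  intro r hr
  -- Pass the spherical Laplacian from the test function to `u`.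
  have hIBP : ∫ ζ, u (r • ζ) * sphLap n Φ ζ ∂(sphMeasure n) =
      ∫ ζ, sphLap n u (r • ζ) * Φ ζ ∂(sphMeasure n) := by
    have hU : IsOpen ((fun x : E n => r • x) ⁻¹' ball (0 : E n) 1) :=
      isOpen_ball.preimage (by fun_prop)
    have h := integral_sphLap_mul hU (hmem r hr)
      (hu.comp (contDiff_const_smul r).contDiffOn (fun x hx => hx)) hΦ.contDiffOn
    refine h.symm.trans ?_
    refine integral_congr_ae (Eventually.of_forall fun ζ => ?_)
    have hs : sphLap n (u ∘ fun x : E n => r • x) ζ = sphLap n u (r • ζ) := by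
      simp only [sphLap, Function.comp_def, linDer_comp_smul]
    simp only [hs]
  have hrG : r * ∫ ζ, fderiv ℝ (NOp n u) (r • ζ) ζ * Φ ζ ∂(sphMeasure n) =
      ∫ ζ, NOp n (NOp n u) (r • ζ) * Φ ζ ∂(sphMeasure n) := by
    rw [← integral_const_mul]
    refine integral_congr_ae (Eventually.of_forall fun ζ => ?_)
    simp [NOp, mul_assoc]
  have hcast : ((n - 2 : ℕ) : ℝ) = (n:ℝ) - 2 := by
    rw [Nat.cast_sub (by omega)]; norm_num
  rw [hIBP, hrG, hcast]
  have hi1 := (integrable_sph (hcomp hNNu r hr)).const_mul (1 - r ^ 2)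
  have hi2 := (integrable_sph (hcomp hNu r hr)).const_mul (((n:ℝ) - 2) * (1 + r ^ 2))
  have hi3 := (integrable_sph (hcomp hLu r hr)).const_mul ((1 - r ^ 2) / 2)
  have hsum : ∫ ζ, ((1 - r ^ 2) * (NOp n (NOp n u) (r • ζ) * Φ ζ) +
      ((n:ℝ) - 2) * (1 + r ^ 2) * (NOp n u (r • ζ) * Φ ζ) +
      (1 - r ^ 2) / 2 * (sphLap n u (r • ζ) * Φ ζ)) ∂(sphMeasure n) = 0 := by
    rw [integral_eq_zero_of_ae]
    filter_upwards [ae_sphere n] with ζ hζ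
    have hx := hmem r hr ζ hζ
    have hnorm : ‖r • ζ‖ = r := by
      rw [mem_sphere_zero_iff_norm] at hζ
      rw [norm_smul, hζ, mul_one, Real.norm_eq_abs, abs_of_pos hr.1]
    have hp := polar_laplacian isOpen_ball hu hx
    have hh := hH _ hx
    rw [hnorm] at hp hh
    have hq : (1 - r ^ 2) ≠ 0 := by nlinarith [hr.1, hr.2]
    have hND : Nder n u (r • ζ) = NOp n u (r • ζ) := rfl
    have hh' : (1 - r ^ 2) * lap n u (r • ζ) + 2 * ((n:ℝ) - 2) * NOp n u (r • ζ) = 0 := by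
      apply mul_left_cancel₀ hq
      rw [hND] at hh
      linear_combination hh
    simp only [Pi.zero_apply]
    linear_combination Φ ζ * (r ^ 2 * hh' - (1 - r ^ 2) * hp)
  have h12 := integral_add hi1 hi2
  have h123 := integral_add (hi1.add hi2) hi3
  simp only [Pi.add_apply] at h123
  rw [h123, h12, integral_const_mul, integral_const_mul,
    integral_const_mul] at hsum
  linear_combination hsum
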